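/- Let R be an invertible n²×n² matrix over k, and let T, T̃ be n×n matrices over S satisfying T·T̃ᵗ = T̃ᵗ·T = I in Mₙ(S). Then Rᵗ·T̃₁·T̃₂ = T̃₂·T̃₁·Rᵗ if and only if (R⁻¹)^{t₁}·T̃₁·T₂ = T₂·T̃₁·(R⁻¹)^{t₁}. -/

import Mathlib

open Matrix

/-- For an `n×n` matrix `m` over `S`, the `n²×n²` matrix `m₁` with entries
`(m₁)^{(i,j)}_{(k,l)} = m^i_k δ_{jl}`. -/
def matLift1 {S : Type*} [Semiring S] {n : ℕ} (m : Matrix (Fin n) (Fin n) S) :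
    Matrix (Fin n × Fin n) (Fin n × Fin n) S :=
  Matrix.of fun p q => if p.2 = q.2 then m p.1 q.1 else 0

/-- For an `n×n` matrix `m` over `S`, the `n²×n²` matrix `m₂` with entries
`(m₂)^{(i,j)}_{(k,l)} = δ_{ik} m^j_l`. -/
def matLift2 {S : Type*} [Semiring S] {n : ℕ} (m : Matrix (Fin n) (Fin n) S) :
    Matrix (Fin n × Fin n) (Fin n × Fin n) S :=
  Matrix.of fun p q => if p.1 = q.1 then m p.2 q.2 else 0

/-- Partial transpose in the first factor: `(M^{t₁})^{(i,j)}_{(k,l)} = M^{(k,j)}_{(i,l)}`. -/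
def pt1 {α : Type*} {n : ℕ} (M : Matrix (Fin n × Fin n) (Fin n × Fin n) α) :
    Matrix (Fin n × Fin n) (Fin n × Fin n) α :=
  Matrix.of fun p q => M (q.1, p.2) (p.1, q.2)

/-- Partial transpose in the second factor: `(M^{t₂})^{(i,j)}_{(k,l)} = M^{(i,l)}_{(k,j)}`. -/
def pt2 {α : Type*} {n : ℕ} (M : Matrix (Fin n × Fin n) (Fin n × Fin n) α) :
    Matrix (Fin n × Fin n) (Fin n × Fin n) α :=
  Matrix.of fun p q => M (p.1, q.2) (q.1, p.2)

/-!
Put `Q = (Rᵗ)⁻¹`. Conjugating by `Rᵗ` turns the first relation into `T̃₁ T̃₂ Q = Q T̃₂ T̃₁`.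
Apply `t₂` to both sides: it passes through `T̃₁`, and since the entries of `Q` are central it
moves `T̃₂` to the other side of `Q` as its transpose, giving `T̃₁ Q^{t₂} T̃₂ᵗ = T̃₂ᵗ Q^{t₂} T̃₁`.
Finally `Q^{t₂} = (R⁻¹)^{t₁}`, and conjugating by `T₂ = (T̃₂ᵗ)⁻¹` yields the second relation.
-/

section PartialTranspose

variable {α β : Type*} {n : ℕ}

theorem pt2_injective :
    Function.Injective (pt2 : Matrix (Fin n × Fin n) (Fin n × Fin n) α → _) :=
  Function.LeftInverse.injective (g := pt2) fun _ => rfl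

theorem pt2_transpose (M : Matrix (Fin n × Fin n) (Fin n × Fin n) α) : pt2 Mᵀ = pt1 M := rfl

theorem pt2_map (M : Matrix (Fin n × Fin n) (Fin n × Fin n) α) (f : α → β) :
    pt2 (M.map f) = (pt2 M).map f := rfl

end PartialTranspose

section Lift

variable {S : Type*} [Semiring S] {n : ℕ}
variable (A B : Matrix (Fin n) (Fin n) S) (M : Matrix (Fin n × Fin n) (Fin n × Fin n) S)

theorem matLift1_mul_apply (p q : Fin n × Fin n) :
    (matLift1 A * M) p q = ∑ a, A p.1 a * M (a, p.2) q := by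
  simp [matLift1, mul_apply, Fintype.sum_prod_type]

theorem mul_matLift1_apply (p q : Fin n × Fin n) :
    (M * matLift1 A) p q = ∑ a, M p (a, q.2) * A a q.1 := by
  simp [matLift1, mul_apply, Fintype.sum_prod_type]

theorem matLift2_mul_apply (p q : Fin n × Fin n) :
    (matLift2 A * M) p q = ∑ b, A p.2 b * M (p.1, b) q := by
  simp [matLift2, mul_apply, Fintype.sum_prod_type]

theorem mul_matLift2_apply (p q : Fin n × Fin n) :
    (M * matLift2 A) p q = ∑ b, M p (q.1, b) * A b q.2 := by
  simp [matLift2, mul_apply, Fintype.sum_prod_type]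

theorem matLift2_one : matLift2 (1 : Matrix (Fin n) (Fin n) S) = 1 := by
  ext p q
  simp [matLift2, one_apply, Prod.ext_iff, ite_and]

theorem matLift2_mul : matLift2 (A * B) = matLift2 A * matLift2 B := by
  ext p q
  rw [matLift2_mul_apply]
  simp [matLift2, mul_apply]

theorem pt2_matLift1_mul : pt2 (matLift1 A * M) = matLift1 A * pt2 M := by
  ext p q
  simp only [pt2, of_apply, matLift1_mul_apply]

theorem pt2_mul_matLift1 : pt2 (M * matLift1 A) = pt2 M * matLift1 A := by
  ext p q
  simp only [pt2, of_apply, mul_matLift1_apply]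

variable {B M}

theorem pt2_matLift2_mul (hBM : ∀ i j p q, Commute (B i j) (M p q)) :
    pt2 (matLift2 B * M) = pt2 M * matLift2 Bᵀ := by
  ext p q
  simp only [pt2, of_apply, matLift2_mul_apply, mul_matLift2_apply, transpose_apply,
    (hBM _ _ _ _).eq]

theorem pt2_mul_matLift2 (hBM : ∀ i j p q, Commute (B i j) (M p q)) :
    pt2 (M * matLift2 B) = matLift2 Bᵀ * pt2 M := by
  ext p q
  simp only [pt2, of_apply, matLift2_mul_apply, mul_matLift2_apply, transpose_apply,
    (hBM _ _ _ _).eq]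

theorem matLift1_mul_matLift2_mul_eq_iff_pt2 (hBM : ∀ i j p q, Commute (B i j) (M p q)) :
    matLift1 A * matLift2 B * M = M * (matLift2 B * matLift1 A) ↔
      matLift1 A * pt2 M * matLift2 Bᵀ = matLift2 Bᵀ * (pt2 M * matLift1 A) := by
  have pt2_left : pt2 (matLift1 A * matLift2 B * M) = matLift1 A * pt2 M * matLift2 Bᵀ := by
    rw [mul_assoc, pt2_matLift1_mul, pt2_matLift2_mul hBM, mul_assoc]
  have pt2_right : pt2 (M * (matLift2 B * matLift1 A)) =
      matLift2 Bᵀ * (pt2 M * matLift1 A) := by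
    rw [← mul_assoc, pt2_mul_matLift1, pt2_mul_matLift2 hBM, mul_assoc]
  rw [← pt2_left, ← pt2_right, pt2_injective.eq_iff]

end Lift

theorem mul_eq_mul_iff_of_inverse {M : Type*} [Monoid M] {a b : M} (hab : a * b = 1)
    (hba : b * a = 1) (x y : M) : a * x = y * a ↔ x * b = b * y :=
  let u : Mˣ := ⟨a, b, hab, hba⟩
  (SemiconjBy.units_inv_symm_left_iff (a := u) (x := x) (y := y)).symm.trans eq_comm

theorem map_transpose_mul_map_transpose_eq_one {ι k S : Type*} [Fintype ι] [DecidableEq ι]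
    [CommSemiring k] [Semiring S] {A B : Matrix ι ι k} (hAB : A * B = 1) (f : k →+* S) :
    Bᵀ.map f * Aᵀ.map f = 1 := by
  rw [← Matrix.map_mul, ← transpose_mul, hAB, transpose_one,
    Matrix.map_one f f.map_zero f.map_one]

theorem stmt9_general {k S : Type*} [CommRing k] [Ring S] [Algebra k S] {n : ℕ}
    (R : Matrix (Fin n × Fin n) (Fin n × Fin n) k) (hR : IsUnit R)
    (A T Ttil : Matrix (Fin n) (Fin n) S) (h1 : T * Ttilᵀ = 1) (h2 : Ttilᵀ * T = 1) :
    (Rᵀ).map (algebraMap k S) * matLift1 A * matLift2 Ttil =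
        matLift2 Ttil * matLift1 A * (Rᵀ).map (algebraMap k S) ↔
      (pt1 R⁻¹).map (algebraMap k S) * matLift1 A * matLift2 T =
        matLift2 T * matLift1 A * (pt1 R⁻¹).map (algebraMap k S) := by
  have hdet : IsUnit R.det := (isUnit_iff_isUnit_det R).1 hR
  set P := (Rᵀ).map (algebraMap k S)
  set Q := (R⁻¹ᵀ).map (algebraMap k S) with hQ
  have hPQ : P * Q = 1 := map_transpose_mul_map_transpose_eq_one (nonsing_inv_mul R hdet) _
  have hQP : Q * P = 1 := map_transpose_mul_map_transpose_eq_one (mul_nonsing_inv R hdet) _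
  have hT : matLift2 T * matLift2 Ttilᵀ = 1 := by rw [← matLift2_mul, h1, matLift2_one]
  have hT' : matLift2 Ttilᵀ * matLift2 T = 1 := by rw [← matLift2_mul, h2, matLift2_one]
  have hcomm : ∀ i j p q, Commute (Ttil i j) (Q p q) := fun _ _ _ _ =>
    Algebra.commute_algebraMap_right _ _
  rw [mul_assoc, mul_eq_mul_iff_of_inverse hPQ hQP,
    matLift1_mul_matLift2_mul_eq_iff_pt2 A hcomm, ← mul_eq_mul_iff_of_inverse hT hT',
    ← mul_assoc, hQ, pt2_map, pt2_transpose, eq_comm]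

/-- for `R` invertible over `k` and `T`, `T̃` over `S` with
`T·T̃ᵗ = T̃ᵗ·T = I`:
`Rᵗ·T̃₁·T̃₂ = T̃₂·T̃₁·Rᵗ ↔ (R⁻¹)^{t₁}·T̃₁·T₂ = T₂·T̃₁·(R⁻¹)^{t₁}`. -/
theorem stmt9 {k S : Type*} [CommRing k] [Ring S] [Algebra k S] {n : ℕ} (hn : 0 < n)
    (R : Matrix (Fin n × Fin n) (Fin n × Fin n) k) (hR : IsUnit R)
    (T Ttil : Matrix (Fin n) (Fin n) S)
    (h1 : T * Ttilᵀ = 1) (h2 : Ttilᵀ * T = 1) :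
    (Rᵀ).map (algebraMap k S) * matLift1 Ttil * matLift2 Ttil =
        matLift2 Ttil * matLift1 Ttil * (Rᵀ).map (algebraMap k S) ↔
      (pt1 R⁻¹).map (algebraMap k S) * matLift1 Ttil * matLift2 T =
        matLift2 T * matLift1 Ttil * (pt1 R⁻¹).map (algebraMap k S) :=
  stmt9_general R hR Ttil T Ttil h1 h2
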